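/- arXiv:1103.3938 — 7 statements merged into one kernel-verified Lean document; each statement's English description precedes it below -/
import Mathlib

section
/- Let ≼ be a comparative probability order on [n]. Then ≼ is representable if and only if there do not exist k ≥ 1 and subsets A₁,…,A_k, B₁,…,B_k of [n] with A_i ≺ B_i for every i = 1,…,k such that (A₁,…,A_k; B₁,…,B_k) is a trading transform, i.e., every element of [n] belongs to exactly as many of the A_j as of the B_j. -/
open Finset

/-- The strict part of a (total antisymmetric) order on subsets. -/
def cpLT {n : ℕ} (le : Finset (Fin n) → Finset (Fin n) → Prop)
    (A B : Finset (Fin n)) : Prop :=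
  le A B ∧ A ≠ B

/-- `le` is a comparative probability order on `[n]`: a linear (total,
antisymmetric, transitive) order on the powerset of `[n]` with `∅ ≺ A` for
nonempty `A`, satisfying de Finetti's axiom. -/
def IsCPO {n : ℕ} (le : Finset (Fin n) → Finset (Fin n) → Prop) : Prop :=
  (∀ A B, le A B ∨ le B A) ∧
  (∀ A B, le A B → le B A → A = B) ∧
  (∀ A B C, le A B → le B C → le A C) ∧
  (∀ A : Finset (Fin n), A ≠ ∅ → cpLT le ∅ A) ∧
  (∀ A B C : Finset (Fin n), Disjoint (A ∪ B) C → (le A B ↔ le (A ∪ C) (B ∪ C)))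

/-- `(A,B)` is a critical pair: disjoint, `A ≺ B`, and no `C` with `A ≺ C ≺ B`. -/
def Critical {n : ℕ} (le : Finset (Fin n) → Finset (Fin n) → Prop)
    (A B : Finset (Fin n)) : Prop :=
  Disjoint A B ∧ cpLT le A B ∧ ¬ ∃ C, cpLT le A C ∧ cpLT le C B

/-- `(A,B)` is a flippable pair: critical, and for every `D` disjoint from
`A ∪ B` the pair `(A ∪ D, B ∪ D)` is adjacent. -/
def Flippable {n : ℕ} (le : Finset (Fin n) → Finset (Fin n) → Prop)
    (A B : Finset (Fin n)) : Prop :=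
  Critical le A B ∧
  ∀ D : Finset (Fin n), Disjoint D (A ∪ B) →
    ¬ ∃ C, cpLT le (A ∪ D) C ∧ cpLT le C (B ∪ D)

/-- The set of flippable pairs of an order. -/
def FlippablePairs {n : ℕ} (le : Finset (Fin n) → Finset (Fin n) → Prop) :
    Set (Finset (Fin n) × Finset (Fin n)) :=
  {p | Flippable le p.1 p.2}

/-- `le` is (additively) representable by a positive utility vector. -/
def Representable {n : ℕ} (le : Finset (Fin n) → Finset (Fin n) → Prop) : Prop :=
  ∃ u : Fin n → ℝ, (∀ i, 0 < u i) ∧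
    ∀ A B : Finset (Fin n), le A B ↔ ∑ i ∈ A, u i ≤ ∑ i ∈ B, u i

/-- `(X, Y) = (A ∪ D, B ∪ D)` for some `D` disjoint from `A ∪ B`. -/
def FlipRel {n : ℕ} (A B X Y : Finset (Fin n)) : Prop :=
  ∃ D : Finset (Fin n), Disjoint D (A ∪ B) ∧ X = A ∪ D ∧ Y = B ∪ D

/-- The relation obtained from `le` by flipping over the pair `(A,B)`:
all comparisons between `A ∪ D` and `B ∪ D` (for `D` disjoint from `A ∪ B`)
are reversed, all other comparisons are kept. -/
def flipOrder {n : ℕ} (le : Finset (Fin n) → Finset (Fin n) → Prop)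
    (A B : Finset (Fin n)) : Finset (Fin n) → Finset (Fin n) → Prop :=
  fun X Y => (le X Y ∧ ¬ FlipRel A B X Y) ∨ FlipRel A B Y X

/-- Utility (sum of weights) of a subset. -/
def usum {k : ℕ} (m : Fin k → ℕ) (A : Finset (Fin k)) : ℕ := ∑ i ∈ A, m i

/-- The order on subsets induced by a utility vector. -/
def uord {k : ℕ} (m : Fin k → ℕ) : Finset (Fin k) → Finset (Fin k) → Prop :=
  fun A B => usum m A ≤ usum m B


theorem gordanAux {V ι : Type*} [AddCommGroup V] [Module ℚ V] [DecidableEq ι] (T : Finset ι) :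
    ∀ w : ι → V, (∃ f : V →ₗ[ℚ] ℚ, ∀ s ∈ T, 0 < f (w s)) ∨
      ∃ c : ι → ℚ, (∀ s ∈ T, 0 ≤ c s) ∧ (∃ s ∈ T, 0 < c s) ∧ ∑ s ∈ T, c s • w s = 0 := by
  induction T using Finset.induction_on with
  | empty => intro w; left; exact ⟨0, by simp⟩
  | insert a T ha ih =>
    intro w
    -- a relation on T with prescribed value at a
    have key : ∀ (c : ι → ℚ) (t : ℚ), (∀ s ∈ T, 0 ≤ c s) → 0 ≤ t →
        ((∃ s ∈ T, 0 < c s) ∨ 0 < t) → t • w a + ∑ s ∈ T, c s • w s = 0 →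
        ∃ c : ι → ℚ, (∀ s ∈ insert a T, 0 ≤ c s) ∧ (∃ s ∈ insert a T, 0 < c s) ∧
          ∑ s ∈ insert a T, c s • w s = 0 := by
      intro c t hc ht hpos hsum
      have hne : ∀ s ∈ T, s ≠ a := fun s hs h => ha (h ▸ hs)
      refine ⟨Function.update c a t, ?_, ?_, ?_⟩
      · intro s hs
        rcases Finset.mem_insert.1 hs with rfl | hs
        · simpa using ht
        · simpa [Function.update_of_ne (hne s hs)] using hc s hs
      · rcases hpos with ⟨s, hs, h⟩ | h
        · exact ⟨s, Finset.mem_insert_of_mem hs, by simpa [Function.update_of_ne (hne s hs)] using h⟩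
        · exact ⟨a, Finset.mem_insert_self _ _, by simpa using h⟩
      · rw [Finset.sum_insert ha, ← hsum]
        congr 1
        · simp
        · exact Finset.sum_congr rfl fun s hs => by rw [Function.update_of_ne (hne s hs)]
    rcases ih w with ⟨f, hf⟩ | ⟨c, hc, hp, hs⟩
    swap
    · right; exact key c 0 hc le_rfl (Or.inl hp) (by simpa using hs)
    by_cases hwa : w a = 0
    · right; exact key 0 1 (by simp) (by norm_num) (Or.inr (by norm_num)) (by simp [hwa])
    obtain ⟨h, hh⟩ : ∃ h : V →ₗ[ℚ] ℚ, h (w a) = 1 := by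
      have : ¬ ∀ φ : Module.Dual ℚ V, φ (w a) = 0 := fun H =>
        hwa ((Module.forall_dual_apply_eq_zero_iff ℚ (w a)).1 H)
      push Not at this
      obtain ⟨φ, hφ⟩ := this
      exact ⟨(φ (w a))⁻¹ • φ, by simp [hφ]⟩
    rcases ih (fun s => w s - h (w s) • w a) with ⟨g, hg⟩ | ⟨c, hc, ⟨s₀, hs₀, hp⟩, hs⟩
    · left
      obtain ⟨N, hN⟩ := Finset.exists_le
        (T.image (fun s => (1 - h (w s)) / g (w s - h (w s) • w a)))
      refine ⟨N • (g - (g (w a)) • h) + h, ?_⟩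
      intro s hs
      rcases Finset.mem_insert.1 hs with rfl | hs
      · simp [hh]
      · have h1 := hN _ (Finset.mem_image_of_mem _ hs)
        have h2 := hg s hs
        rw [div_le_iff₀ h2] at h1
        simp only [map_sub, map_smul, smul_eq_mul] at h1
        simp only [LinearMap.add_apply, LinearMap.smul_apply, LinearMap.sub_apply, smul_eq_mul]
        nlinarith
    · have e : ∑ s ∈ T, c s • w s = (∑ s ∈ T, c s * h (w s)) • w a := by
        simp only [smul_sub, Finset.sum_sub_distrib, smul_smul, ← Finset.sum_smul] at hs
        exact sub_eq_zero.1 hs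
      by_cases ht : (∑ s ∈ T, c s * h (w s)) ≤ 0
      · right
        exact key c (-(∑ s ∈ T, c s * h (w s))) hc (by linarith) (Or.inl ⟨s₀, hs₀, hp⟩)
          (by rw [e]; simp)
      · left
        push Not at ht
        refine ⟨f, fun s hs => ?_⟩
        rcases Finset.mem_insert.1 hs with rfl | hs
        swap
        · exact hf s hs
        have e2 := congrArg f e
        simp only [map_sum, map_smul, smul_eq_mul] at e2
        have : 0 < ∑ s ∈ T, c s * f (w s) :=
          Finset.sum_pos' (fun s hs => mul_nonneg (hc s hs) (hf s hs).le)
            ⟨s₀, hs₀, mul_pos hp (hf s₀ hs₀)⟩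
        rw [e2] at this
        exact (pos_iff_pos_of_mul_pos this).1 ht

theorem clearDenoms {ι : Type*} (T : Finset ι) (c : ι → ℚ) (hc : ∀ s ∈ T, 0 ≤ c s) :
    ∃ D : ℚ, 0 < D ∧ ∀ s ∈ T, ∃ m : ℕ, (m : ℚ) = D * c s := by
  classical
  induction T using Finset.induction_on with
  | empty => exact ⟨1, by norm_num, by simp⟩
  | insert a T ha ih =>
    obtain ⟨D, hD, H⟩ := ih fun s hs => hc s (Finset.mem_insert_of_mem hs)
    have h0 := hc a (Finset.mem_insert_self _ _)
    -- make D natural by multiplying with its denominator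
    refine ⟨D.den * D * (c a).den, by have := D.den_pos; have := (c a).den_pos; positivity, ?_⟩
    intro s hs
    rcases Finset.mem_insert.1 hs with rfl | hs
    · refine ⟨D.num.toNat * (c s).num.toNat, ?_⟩
      have h1 : ((D.num.toNat : ℕ) : ℚ) = D.den * D := by
        have : ((D.num.toNat : ℕ) : ℤ) = D.num := Int.toNat_of_nonneg (Rat.num_nonneg.2 hD.le)
        rw [Rat.den_mul_eq_num]; exact_mod_cast this
      have h2 : (((c s).num.toNat : ℕ) : ℚ) = (c s).den * c s := by
        have : (((c s).num.toNat : ℕ) : ℤ) = (c s).num := Int.toNat_of_nonneg (Rat.num_nonneg.2 h0)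
        rw [Rat.den_mul_eq_num]; exact_mod_cast this
      push_cast
      rw [h1, h2]; ring
    · obtain ⟨m, hm⟩ := H s hs
      refine ⟨D.den * m * (c a).den, ?_⟩
      push_cast
      rw [hm]; ring

theorem tradeSum {n k : ℕ} {K : Type*} [CommRing K] (A : Fin k → Finset (Fin n)) (u : Fin n → K) :
    ∑ j, ∑ i ∈ A j, u i =
      ∑ i, ((Finset.univ.filter (fun j => i ∈ A j)).card : K) * u i := by
  have : ∀ j, ∑ i ∈ A j, u i = ∑ i, if i ∈ A j then u i else 0 := by
    intro j; simp
  simp only [this]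
  rw [Finset.sum_comm]
  refine Finset.sum_congr rfl fun i _ => ?_
  rw [← Finset.sum_filter]
  simp

/-- Kraft–Pratt–Seidenberg: a comparative probability order is representable iff
there is no trading transform `(A₁,…,A_k; B₁,…,B_k)` with `A_i ≺ B_i` for all `i`. -/
theorem stmt0 {n : ℕ} (le : Finset (Fin n) → Finset (Fin n) → Prop) (h : IsCPO le) :
    Representable le ↔
      ¬ ∃ (k : ℕ) (_ : 1 ≤ k) (A B : Fin k → Finset (Fin n)),
        (∀ j : Fin k, cpLT le (A j) (B j)) ∧
        (∀ i : Fin n,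
          (Finset.univ.filter (fun j => i ∈ A j)).card =
          (Finset.univ.filter (fun j => i ∈ B j)).card) := by

  classical
  obtain ⟨htot, hanti, htrans, hemp, hdf⟩ := h
  constructor
  · rintro ⟨u, hu, hrep⟩ ⟨k, hk, A, B, hlt, htr⟩
    have h1 : ∑ j, ∑ i ∈ A j, u i < ∑ j, ∑ i ∈ B j, u i := by
      refine Finset.sum_lt_sum_of_nonempty ⟨⟨0, hk⟩, Finset.mem_univ _⟩ fun j _ => ?_
      by_contra hcon
      push Not at hcon
      exact (hlt j).2 (hanti _ _ (hlt j).1 ((hrep _ _).2 hcon))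
    rw [tradeSum, tradeSum] at h1
    simp only [htr] at h1
    exact lt_irrefl _ h1
  · intro hno
    let T : Finset (Finset (Fin n) × Finset (Fin n)) :=
      Finset.univ.filter fun p => cpLT le p.1 p.2
    have hT : ∀ p, p ∈ T ↔ cpLT le p.1 p.2 := by intro p; simp [T]
    let ind : Finset (Fin n) → (Fin n → ℚ) := fun A => ∑ i ∈ A, Pi.single i 1
    rcases gordanAux T (fun p => ind p.2 - ind p.1) with ⟨f, hf⟩ | ⟨c, hc, ⟨p₀, hp₀, hpos⟩, hsum⟩
    · have hlt : ∀ A B, cpLT le A B →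
          ∑ i ∈ A, ((f (Pi.single i 1) : ℚ) : ℝ) < ∑ i ∈ B, ((f (Pi.single i 1) : ℚ) : ℝ) := by
        intro A B hAB
        have := hf (A, B) ((hT _).2 hAB)
        simp only [ind, map_sub, map_sum, sub_pos] at this
        exact_mod_cast this
      refine ⟨fun i => ((f (Pi.single i 1) : ℚ) : ℝ), fun i => ?_, fun A B => ⟨fun hAB => ?_, fun hAB => ?_⟩⟩
      · simpa using hlt ∅ {i} (hemp _ (by simp))
      · by_cases he : A = B
        · rw [he]
        · exact (hlt A B ⟨hAB, he⟩).le
      · by_contra hcon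
        have hBA : le B A := (htot A B).resolve_left hcon
        have hne : B ≠ A := by rintro rfl; exact hcon hBA
        exact absurd (hlt B A ⟨hBA, hne⟩) (not_lt.2 hAB)
    · exfalso
      apply hno
      obtain ⟨D, hD, hm⟩ := clearDenoms T c hc
      choose m hm using hm
      let S := Σ p : {p // p ∈ T}, Fin (m p.1 p.2)
      let e : Fin (Fintype.card S) ≃ S := (Fintype.equivFin S).symm
      have hcount : ∀ (P : Finset (Fin n) × Finset (Fin n) → Prop) [DecidablePred P],
          ((Finset.univ.filter fun j => P (e j).1.1).card : ℚ) =
            D * ∑ p ∈ T, c p * (if P p then 1 else 0) := by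
        intro P _
        have h1 : ((Finset.univ.filter fun j => P (e j).1.1).card : ℚ) =
            ∑ j, if P (e j).1.1 then (1 : ℚ) else 0 := by simp
        rw [h1, Equiv.sum_comp e (fun s => if P s.1.1 then (1 : ℚ) else 0), Fintype.sum_sigma,
          Finset.mul_sum, ← Finset.sum_coe_sort T]
        refine Finset.sum_congr rfl fun p _ => ?_
        by_cases hP : P p.1
        · simp [hP, hm p.1 p.2]
        · simp [hP]
      have hind : ∀ (A : Finset (Fin n)) i, ind A i = if i ∈ A then 1 else 0 := by
        intro A i
        simp [ind, Finset.sum_apply, Pi.single_apply]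
      refine ⟨Fintype.card S, ?_, fun j => (e j).1.1.1, fun j => (e j).1.1.2, ?_, ?_⟩
      · have : 0 < m p₀ hp₀ := by
          have : (0 : ℚ) < m p₀ hp₀ := by rw [hm]; positivity
          exact_mod_cast this
        exact Fintype.card_pos_iff.2 ⟨⟨⟨p₀, hp₀⟩, ⟨0, this⟩⟩⟩
      · intro j
        exact (hT _).1 (e j).1.2
      · intro i
        have h1 := hcount (fun p => i ∈ p.1)
        have h2 := hcount (fun p => i ∈ p.2)
        have h3 := congrFun hsum i
        simp only [Finset.sum_apply, Pi.smul_apply, Pi.sub_apply, hind, smul_eq_mul, mul_sub,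
          Finset.sum_sub_distrib, Pi.zero_apply] at h3
        have h4 := sub_eq_zero.1 h3
        rw [h4, ← h1] at h2
        exact_mod_cast h2.symm
end

section
/- Let ≼ be a comparative probability order on [n] and let A, B be disjoint subsets of [n] with A ≺ B. Then (A,B) is a flippable pair for ≼ if and only if the vector χ_B − χ_A is irreducible in the discrete cone C(≼), i.e., there do not exist vectors u, v ∈ C(≼), each different from χ_B − χ_A, with χ_B − χ_A = u + v. -/
open Finset

/-- Characteristic vector of a subset of `[n]`. -/
def chi {n : ℕ} (S : Finset (Fin n)) : Fin n → ℤ := fun i => if i ∈ S then 1 else 0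

/-- The discrete cone of an order: all vectors `χ_B − χ_A` with `A ≼ B`. -/
def cone {n : ℕ} (le : Finset (Fin n) → Finset (Fin n) → Prop) : Set (Fin n → ℤ) :=
  {x | ∃ A B : Finset (Fin n), le A B ∧ x = chi B - chi A}

theorem cpo_sdiff_iff {n : ℕ} (le : Finset (Fin n) → Finset (Fin n) → Prop) (h : IsCPO le)
    (P Q : Finset (Fin n)) : le (P \ Q) (Q \ P) ↔ le P Q := by
  have hh := h.2.2.2.2 (P \ Q) (Q \ P) (P ∩ Q) (by
    rw [Finset.disjoint_left]; intro x; simp; tauto)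
  have e1 : P \ Q ∪ P ∩ Q = P := by ext x; simp; tauto
  have e2 : Q \ P ∪ P ∩ Q = Q := by ext x; simp; tauto
  rwa [e1, e2] at hh

theorem le_of_chi {n : ℕ} (le : Finset (Fin n) → Finset (Fin n) → Prop) (h : IsCPO le)
    (P Q X Y : Finset (Fin n)) (hPQ : le P Q) (e : chi Q - chi P = chi Y - chi X) :
    le X Y := by
  have e1 : P \ Q = X \ Y := by
    ext i
    have := congrFun e i
    simp only [chi, Pi.sub_apply] at this
    simp only [Finset.mem_sdiff]
    split_ifs at this <;> simp_all
  have e2 : Q \ P = Y \ X := by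
    ext i
    have := congrFun e i
    simp only [chi, Pi.sub_apply] at this
    simp only [Finset.mem_sdiff]
    split_ifs at this <;> simp_all
  rw [← cpo_sdiff_iff le h, ← e1, ← e2, cpo_sdiff_iff le h]
  exact hPQ

theorem chi_inj {n : ℕ} {P Q : Finset (Fin n)} (e : chi P = chi Q) : P = Q := by
  ext i
  have := congrFun e i
  simp only [chi] at this
  split_ifs at this <;> simp_all

theorem chi_union {n : ℕ} {P Q : Finset (Fin n)} (hd : Disjoint P Q) :
    chi (P ∪ Q) = chi P + chi Q := by
  ext i
  have : i ∈ P → i ∉ Q := fun hi => Finset.disjoint_left.1 hd hi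
  simp only [chi, Pi.add_apply, Finset.mem_union]
  split_ifs <;> simp_all

theorem cone_bound {n : ℕ} {le : Finset (Fin n) → Finset (Fin n) → Prop} {u : Fin n → ℤ}
    (hu : u ∈ cone le) (i : Fin n) : -1 ≤ u i ∧ u i ≤ 1 := by
  obtain ⟨P, Q, -, rfl⟩ := hu
  simp only [chi, Pi.sub_apply]
  split_ifs <;> simp

theorem reducible_of_between {n : ℕ} (le : Finset (Fin n) → Finset (Fin n) → Prop)
    (A B D : Finset (Fin n)) (hD : Disjoint D (A ∪ B))
    (hC : ∃ C, cpLT le (A ∪ D) C ∧ cpLT le C (B ∪ D)) :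
    ∃ u ∈ cone le, ∃ v ∈ cone le,
        u ≠ chi B - chi A ∧ v ≠ chi B - chi A ∧ chi B - chi A = u + v := by
  obtain ⟨C, ⟨h1, n1⟩, h2, n2⟩ := hC
  rw [Finset.disjoint_union_right] at hD
  have eA := chi_union hD.1.symm
  have eB := chi_union hD.2.symm
  have hw : chi B - chi A = chi (B ∪ D) - chi (A ∪ D) := by rw [eA, eB]; abel
  rw [hw]
  refine ⟨_, ⟨_, _, h1, rfl⟩, _, ⟨_, _, h2, rfl⟩, ?_, ?_, ?_⟩
  · intro e
    exact n2 (chi_inj (sub_left_injective e))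
  · intro e
    exact n1 (chi_inj (sub_right_injective e)).symm
  · abel

/-- A pair `(A,B)` of disjoint subsets with `A ≺ B` is flippable iff
`χ_B − χ_A` is irreducible in the discrete cone `C(≼)`. -/
theorem stmt1 {n : ℕ} (le : Finset (Fin n) → Finset (Fin n) → Prop) (h : IsCPO le)
    (A B : Finset (Fin n)) (hd : Disjoint A B) (hAB : cpLT le A B) :
    Flippable le A B ↔
      ¬ ∃ u ∈ cone le, ∃ v ∈ cone le,
        u ≠ chi B - chi A ∧ v ≠ chi B - chi A ∧ chi B - chi A = u + v := by
  constructor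
  · rintro ⟨-, hF⟩ ⟨u, hu, v, hv, nu, nv, e⟩
    have key : ∀ i, (if i ∈ B then (1:ℤ) else 0) - (if i ∈ A then 1 else 0) = u i + v i :=
      fun i => congrFun e i
    set D : Finset (Fin n) := Finset.univ.filter (fun i => i ∉ A ∧ i ∉ B ∧ u i = -1) with hDdef
    set C : Finset (Fin n) := Finset.univ.filter
      (fun i => (if i ∈ A ∪ D then (1:ℤ) else 0) + u i = 1) with hCdef
    have hD : Disjoint D (A ∪ B) := by
      rw [Finset.disjoint_left]; intro x; simp [hDdef]; tauto
    have eu : u = chi C - chi (A ∪ D) := by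
      ext i
      have k := key i
      have b1 := cone_bound hu i
      have b2 := cone_bound hv i
      have d : i ∈ A → i ∉ B := fun hi => Finset.disjoint_left.1 hd hi
      simp only [chi, Pi.sub_apply, hCdef, hDdef, Finset.mem_union, Finset.mem_filter,
        Finset.mem_univ, true_and]
      by_cases hA : i ∈ A <;> by_cases hB : i ∈ B <;> by_cases h1 : u i = -1 <;>
        simp [hA, hB, h1] at k d ⊢ <;> (try split_ifs) <;> omega
    have hD' := hD
    rw [Finset.disjoint_union_right] at hD'
    have ev : v = chi (B ∪ D) - chi C := by
      have eA := chi_union hD'.1.symm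
      have eB := chi_union hD'.2.symm
      rw [eA] at eu
      rw [eB]
      have : v = (chi B - chi A) - u := by rw [e]; abel
      rw [this, eu]; abel
    obtain ⟨P, Q, hPQ, eu'⟩ := id hu
    obtain ⟨R, S, hRS, ev'⟩ := id hv
    refine hF D hD ⟨C, ⟨le_of_chi le h P Q _ _ hPQ (eu'.symm.trans eu), ?_⟩,
      le_of_chi le h R S _ _ hRS (ev'.symm.trans ev), ?_⟩
    · intro hc
      rw [← hc, sub_self] at eu
      apply nv
      rw [e, eu, zero_add]
    · intro hc
      rw [← hc, sub_self] at ev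
      apply nu
      rw [e, ev, add_zero]
  · intro hn
    refine ⟨⟨hd, hAB, fun hC => hn ?_⟩, fun D hD hC => hn (reducible_of_between le A B D hD hC)⟩
    exact reducible_of_between le A B ∅ (by simp) (by simpa using hC)
end

section
/- Let ≼ be a comparative probability order on [n] and let (A,B) be a flippable pair for ≼ with A ≠ ∅. Define the relation ≼′ on the powerset of [n] by reversing exactly the comparisons between A∪D and B∪D for every D ⊆ [n] disjoint from A∪B (so B∪D ≺′ A∪D for all such D) and keeping all other comparisons of ≼ unchanged. Then ≼′ is again a comparative probability order on [n]. -/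
open Finset

theorem flipRel_union_iff {n : ℕ} {A B X Y C : Finset (Fin n)} (hAB : Disjoint A B)
    (hC : Disjoint (X ∪ Y) C) : FlipRel A B X Y ↔ FlipRel A B (X ∪ C) (Y ∪ C) := by
  simp only [Finset.disjoint_left, Finset.mem_union] at hAB hC
  constructor
  · rintro ⟨D, hD, rfl, rfl⟩
    refine ⟨D ∪ C, ?_, by rw [Finset.union_assoc], by rw [Finset.union_assoc]⟩
    simp only [Finset.disjoint_left, Finset.mem_union] at hD hC ⊢
    grind
  · rintro ⟨D, hD, h1, h2⟩
    simp only [Finset.disjoint_left, Finset.mem_union] at hD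
    simp only [Finset.ext_iff, Finset.mem_union] at h1 h2
    refine ⟨D \ C, ?_, ?_, ?_⟩
    · simp only [Finset.disjoint_left, Finset.mem_union, Finset.mem_sdiff]
      grind
    · ext a
      have := h1 a
      have := h2 a
      have := @hC a
      have := @hD a
      have := @hAB a
      simp only [Finset.mem_union, Finset.mem_sdiff]
      tauto
    · ext a
      have := h1 a
      have := h2 a
      have := @hC a
      have := @hD a
      have := @hAB a
      simp only [Finset.mem_union, Finset.mem_sdiff]
      tauto

theorem flipRel_chain {n : ℕ} {A B X Y Z : Finset (Fin n)} (hAB : Disjoint A B)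
    (hA : A ≠ ∅) (h1 : FlipRel A B X Y) (h2 : FlipRel A B Y Z) : False := by
  obtain ⟨D, hD, -, rfl⟩ := h1
  obtain ⟨E, hE, h3, -⟩ := h2
  obtain ⟨a, ha⟩ := Finset.nonempty_iff_ne_empty.mpr hA
  have h4 : a ∈ B ∪ D := by rw [h3]; exact Finset.mem_union_left _ ha
  simp only [Finset.disjoint_left, Finset.mem_union] at hAB hD h4
  grind

/-- Flipping a comparative probability order over a flippable pair `(A,B)` with
`A ≠ ∅` yields again a comparative probability order. -/
theorem stmt2 {n : ℕ} (le : Finset (Fin n) → Finset (Fin n) → Prop) (h : IsCPO le)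
    (A B : Finset (Fin n)) (hf : Flippable le A B) (hA : A ≠ ∅) :
    IsCPO (flipOrder le A B) := by
  obtain ⟨htot, hanti, htrans, hemp, hdf⟩ := h
  obtain ⟨⟨hAB, hlt, -⟩, hadj⟩ := hf
  have hrefl : ∀ X, le X X := fun X => (htot X X).elim id id
  have chain : ∀ X Y Z, FlipRel A B X Y → FlipRel A B Y Z → False :=
    fun X Y Z => flipRel_chain hAB hA
  have F1 : ∀ X Y, FlipRel A B X Y → le X Y := by
    rintro X Y ⟨D, hD, rfl, rfl⟩
    exact (hdf A B D hD.symm).1 hlt.1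
  have F2 : ∀ X Y Z, FlipRel A B X Y → le X Z → le Z Y → Z = X ∨ Z = Y := by
    rintro X Y Z ⟨D, hD, rfl, rfl⟩ h1 h2
    by_contra hc
    push Not at hc
    exact hadj D hD ⟨Z, ⟨h1, hc.1.symm⟩, h2, hc.2⟩
  refine ⟨?_, ?_, ?_, ?_, ?_⟩
  · intro X Y
    unfold flipOrder
    have := htot X Y
    tauto
  · rintro X Y (⟨h1, h2⟩ | h1) (⟨h3, h4⟩ | h3)
    · exact hanti _ _ h1 h3
    · exact absurd h3 h2
    · exact absurd h1 h4
    · exact (chain _ _ _ h1 h3).elim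
  · rintro X Y Z (⟨h1, h2⟩ | h1) (⟨h3, h4⟩ | h3)
    · refine Or.inl ⟨htrans _ _ _ h1 h3, fun hF => ?_⟩
      rcases F2 _ _ _ hF h1 h3 with rfl | rfl
      · exact h4 hF
      · exact h2 hF
    · rcases htot X Z with h5 | h5
      · exact Or.inl ⟨h5, fun hF => chain _ _ _ hF h3⟩
      · rcases F2 _ _ _ h3 h5 h1 with rfl | rfl
        · exact absurd h3 h2
        · exact Or.inr h3
    · rcases htot X Z with h5 | h5
      · exact Or.inl ⟨h5, fun hF => chain _ _ _ h1 hF⟩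
      · rcases F2 _ _ _ h1 h3 h5 with rfl | rfl
        · exact Or.inr h1
        · exact absurd h1 h4
    · exact (chain _ _ _ h3 h1).elim
  · intro X hX
    refine ⟨Or.inl ⟨(hemp X hX).1, ?_⟩, (hemp X hX).2⟩
    rintro ⟨D, -, h1, -⟩
    exact hA (Finset.union_eq_empty.mp h1.symm).1
  · intro X Y C hC
    unfold flipOrder
    rw [hdf X Y C hC, flipRel_union_iff hAB hC,
      flipRel_union_iff (X := Y) (Y := X) hAB (by rwa [Finset.union_comm])]
end

section
/- For every n ≥ 4 there exists a representable comparative probability order ≼ on [n] such that: (a) ≼ has exactly F_{n+1} flippable pairs, where F denotes the Fibonacci sequence with F₁ = F₂ = 1; and (b) for every flippable pair (A,B) of ≼ with A ≠ ∅, the comparative probability order obtained from ≼ by flipping over (A,B) (reversing exactly the comparisons between A∪D and B∪D for every D disjoint from A∪B) is representable. -/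
open Finset

/-! ### Orders given by integer weights with distinct subset sums -/

lemma cpLT_iff {n : ℕ} {m : Fin n → ℕ} (inj : Function.Injective (usum m))
    (A B : Finset (Fin n)) : cpLT (uord m) A B ↔ usum m A < usum m B := by
  unfold cpLT uord
  constructor
  · rintro ⟨h, hne⟩
    exact lt_of_le_of_ne h fun e => hne (inj e)
  · intro h
    exact ⟨h.le, fun e => by subst e; exact lt_irrefl _ h⟩

lemma usum_union {n : ℕ} (m : Fin n → ℕ) {A B : Finset (Fin n)} (h : Disjoint A B) :
    usum m (A ∪ B) = usum m A + usum m B := Finset.sum_union h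

lemma usum_empty {n : ℕ} (m : Fin n → ℕ) : usum m ∅ = 0 := Finset.sum_empty

lemma usum_pos {n : ℕ} {m : Fin n → ℕ} (inj : Function.Injective (usum m))
    {A : Finset (Fin n)} (hA : A ≠ ∅) : 0 < usum m A := by
  rcases Nat.eq_zero_or_pos (usum m A) with h | h
  · exact absurd (inj (h.trans (usum_empty m).symm)) hA
  · exact h

lemma uord_isCPO {n : ℕ} {m : Fin n → ℕ} (inj : Function.Injective (usum m)) :
    IsCPO (uord m) := by
  refine ⟨fun A B => le_total _ _, fun A B h1 h2 => inj (le_antisymm h1 h2),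
    fun A B C h1 h2 => le_trans h1 h2, ?_, ?_⟩
  · intro A hA
    rw [cpLT_iff inj, usum_empty]
    exact usum_pos inj hA
  · intro A B C h
    rw [Finset.disjoint_union_left] at h
    unfold uord
    rw [usum_union m h.1, usum_union m h.2]
    omega

lemma uord_rep {n : ℕ} {m : Fin n → ℕ} (inj : Function.Injective (usum m)) :
    Representable (uord m) := by
  refine ⟨fun i => (m i : ℝ), ?_, ?_⟩
  · intro i
    have := usum_pos inj (Finset.singleton_ne_empty i)
    simp only [usum, Finset.sum_singleton] at this
    show (0 : ℝ) < (m i : ℝ)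
    exact_mod_cast this
  · intro A B
    have hc : (∑ i ∈ A, (m i : ℝ) ≤ ∑ i ∈ B, (m i : ℝ)) ↔ ∑ i ∈ A, m i ≤ ∑ i ∈ B, m i := by
      exact_mod_cast Iff.rfl
    exact hc.symm

/-- The perturbed weights realising a flip. -/
def flipW {n : ℕ} (m : Fin n → ℕ) (A B : Finset (Fin n)) (i : Fin n) : ℤ :=
  (2 * ((#A : ℤ) + #B) - 1) * m i - 2 * ((if i ∈ B then 1 else 0) - (if i ∈ A then 1 else 0))

lemma flipW_sum {n : ℕ} (m : Fin n → ℕ) (A B X : Finset (Fin n)) :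
    ∑ i ∈ X, flipW m A B i =
      (2 * ((#A : ℤ) + #B) - 1) * usum m X - 2 * ((#(X ∩ B) : ℤ) - #(X ∩ A)) := by
  unfold flipW usum
  rw [Finset.sum_sub_distrib, ← Finset.mul_sum, ← Finset.mul_sum, Finset.sum_sub_distrib]
  simp

lemma flipRel_usum {n : ℕ} {m : Fin n → ℕ} {A B X Y : Finset (Fin n)}
    (hs : usum m B = usum m A + 1) (h : FlipRel A B X Y) : usum m Y = usum m X + 1 := by
  obtain ⟨D, hD, rfl, rfl⟩ := h
  rw [Finset.disjoint_union_right] at hD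
  rw [usum_union m hD.1.symm, usum_union m hD.2.symm]
  omega

lemma flip_key {n : ℕ} {m : Fin n → ℕ} (inj : Function.Injective (usum m))
    {A B : Finset (Fin n)} (hAB : Disjoint A B) (hs : usum m B = usum m A + 1)
    (hA : A ≠ ∅) {X Y : Finset (Fin n)} (hXY : usum m X < usum m Y) :
    (FlipRel A B X Y ∧ ∑ i ∈ Y, flipW m A B i < ∑ i ∈ X, flipW m A B i) ∨
    (¬ FlipRel A B X Y ∧ ∑ i ∈ X, flipW m A B i < ∑ i ∈ Y, flipW m A B i) := by
  have hB : B ≠ ∅ := by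
    rintro rfl
    rw [usum_empty] at hs
    omega
  have cA : 1 ≤ #A := Finset.card_pos.2 (Finset.nonempty_iff_ne_empty.2 hA)
  have cB : 1 ≤ #B := Finset.card_pos.2 (Finset.nonempty_iff_ne_empty.2 hB)
  simp only [flipW_sum]
  by_cases hF : FlipRel A B X Y
  · left
    refine ⟨hF, ?_⟩
    have e := flipRel_usum hs hF
    obtain ⟨D, hD, rfl, rfl⟩ := hF
    rw [Finset.disjoint_union_right] at hD
    have e1 : (A ∪ D) ∩ B = ∅ := by
      rw [← Finset.disjoint_iff_inter_eq_empty, Finset.disjoint_union_left]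
      exact ⟨hAB, hD.2⟩
    have e2 : (A ∪ D) ∩ A = A := Finset.inter_eq_right.2 Finset.subset_union_left
    have e3 : (B ∪ D) ∩ A = ∅ := by
      rw [← Finset.disjoint_iff_inter_eq_empty, Finset.disjoint_union_left]
      exact ⟨hAB.symm, hD.1⟩
    have e4 : (B ∪ D) ∩ B = B := Finset.inter_eq_right.2 Finset.subset_union_left
    rw [e1, e2, e3, e4, e]
    push_cast
    simp only [Finset.card_empty]
    push_cast
    linarith
  · right
    refine ⟨hF, ?_⟩
    have b1 : #(Y ∩ B) ≤ #B := Finset.card_le_card Finset.inter_subset_right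
    have b2 : #(X ∩ A) ≤ #A := Finset.card_le_card Finset.inter_subset_right
    by_cases h2 : usum m X + 2 ≤ usum m Y
    · have h2' : (usum m X : ℤ) + 2 ≤ usum m Y := by exact_mod_cast h2
      have hL : (2 * ((#A : ℤ) + #B) - 1) * (usum m X + 2) ≤
          (2 * ((#A : ℤ) + #B) - 1) * usum m Y :=
        mul_le_mul_of_nonneg_left h2' (by omega)
      rw [mul_add] at hL
      omega
    · have e : usum m Y = usum m X + 1 := by omega
      have hlt : #(Y ∩ B) + #(X ∩ A) < #A + #B + #(X ∩ B) + #(Y ∩ A) := by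
        by_contra hcon
        apply hF
        have s1 : Y ∩ B = B := Finset.eq_of_subset_of_card_le Finset.inter_subset_right (by omega)
        have s2 : X ∩ A = A := Finset.eq_of_subset_of_card_le Finset.inter_subset_right (by omega)
        have s3 : X ∩ B = ∅ := Finset.card_eq_zero.1 (by omega)
        have s4 : Y ∩ A = ∅ := Finset.card_eq_zero.1 (by omega)
        rw [Finset.inter_eq_right] at s1 s2
        rw [← Finset.disjoint_iff_inter_eq_empty] at s3 s4
        have x1 : X = A ∪ X \ A := (Finset.union_sdiff_of_subset s2).symm
        have y1 : Y = B ∪ Y \ B := (Finset.union_sdiff_of_subset s1).symm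
        have ex := usum_union m (Finset.disjoint_sdiff (s := A) (t := X))
        have ey := usum_union m (Finset.disjoint_sdiff (s := B) (t := Y))
        rw [← x1] at ex
        rw [← y1] at ey
        have eD : X \ A = Y \ B := inj (by omega)
        refine ⟨X \ A, ?_, x1, ?_⟩
        · rw [Finset.disjoint_union_right]
          exact ⟨Finset.sdiff_disjoint, Finset.disjoint_of_subset_left Finset.sdiff_subset s3⟩
        · rw [eD]
          exact y1
      rw [e]
      push_cast
      rw [mul_add (_ - _ : ℤ), mul_one]
      omega

lemma flip_rep {n : ℕ} {m : Fin n → ℕ} (inj : Function.Injective (usum m))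
    {A B : Finset (Fin n)} (hAB : Disjoint A B) (hs : usum m B = usum m A + 1)
    (hA : A ≠ ∅) : Representable (flipOrder (uord m) A B) := by
  refine ⟨fun i => (flipW m A B i : ℝ), ?_, ?_⟩
  · intro i
    have hp := usum_pos inj (Finset.singleton_ne_empty i)
    rw [← usum_empty m] at hp
    rcases flip_key inj hAB hs hA hp with ⟨⟨D, _, h, _⟩, _⟩ | ⟨_, h⟩
    · exact absurd (Finset.union_eq_empty.1 h.symm).1 hA
    · simp only [Finset.sum_empty, Finset.sum_singleton] at h
      show (0 : ℝ) < (flipW m A B i : ℝ)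
      exact_mod_cast h
  · intro X Y
    have hc : (∑ i ∈ X, (flipW m A B i : ℝ) ≤ ∑ i ∈ Y, (flipW m A B i : ℝ)) ↔
        ∑ i ∈ X, flipW m A B i ≤ ∑ i ∈ Y, flipW m A B i := by
      exact_mod_cast Iff.rfl
    rw [hc]
    unfold flipOrder uord
    rcases lt_trichotomy (usum m X) (usum m Y) with h | h | h
    · have n1 : ¬ FlipRel A B Y X := fun hf => by
        have := flipRel_usum hs hf
        omega
      rcases flip_key inj hAB hs hA h with ⟨hf, hw⟩ | ⟨hf, hw⟩
      · simp [n1, hf, hw]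
      · simp [hf, hw.le, h.le]
    · have n1 : ¬ FlipRel A B X Y := fun hf => by
        have := flipRel_usum hs hf
        omega
      have e := inj h
      subst e
      simp [n1]
    · rcases flip_key inj hAB hs hA h with ⟨hf, hw⟩ | ⟨hf, hw⟩
      · simp [hf, hw.le]
      · simp [hf, not_le.2 hw, not_le.2 h]

lemma flippable_iff {n : ℕ} {m : Fin n → ℕ} (inj : Function.Injective (usum m))
    (gap : ∀ A B : Finset (Fin n), Disjoint A B → usum m A + 2 ≤ usum m B →
      ∃ D, Disjoint D (A ∪ B) ∧ ∃ C, usum m (A ∪ D) < usum m C ∧ usum m C < usum m (B ∪ D))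
    (A B : Finset (Fin n)) :
    Flippable (uord m) A B ↔ Disjoint A B ∧ usum m B = usum m A + 1 := by
  unfold Flippable Critical
  simp only [cpLT_iff inj]
  constructor
  · rintro ⟨⟨hd, hlt, _⟩, h⟩
    refine ⟨hd, ?_⟩
    by_contra hne
    obtain ⟨D, hD, hC⟩ := gap A B hd (by omega)
    exact h D hD hC
  · rintro ⟨hd, hs⟩
    refine ⟨⟨hd, by omega, ?_⟩, ?_⟩
    · rintro ⟨C, h1, h2⟩
      omega
    · rintro D hD ⟨C, h1, h2⟩
      rw [Finset.disjoint_union_right] at hD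
      rw [usum_union m hD.1.symm] at h1
      rw [usum_union m hD.2.symm] at h2
      omega

/-! ### The weights `q, 2, 4, 8, …, 2^k` -/

/-- The weights `q, 2, 4, …, 2^k`. -/
def wt (k q : ℕ) : Fin (k + 1) → ℕ := Fin.cons q fun i : Fin k => 2 * 2 ^ (i : ℕ)

/-- The part of a set avoiding the first atom. -/
def tl {k : ℕ} (A : Finset (Fin (k + 1))) : Finset (Fin k) := univ.filter fun i => i.succ ∈ A

/-- Binary value. -/
def bv {k : ℕ} (T : Finset (Fin k)) : ℕ := ∑ i ∈ T, 2 ^ (i : ℕ)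

lemma usum_wt (k q : ℕ) (A : Finset (Fin (k + 1))) :
    usum (wt k q) A = (if 0 ∈ A then q else 0) + 2 * bv (tl A) := by
  unfold usum bv tl wt
  rw [Finset.mul_sum, Finset.sum_filter]
  have h : A = univ.filter fun i => i ∈ A := by simp
  conv_lhs => rw [h]
  rw [Finset.sum_filter, Fin.sum_univ_succ]
  simp

lemma bv_inj (k : ℕ) : Function.Injective (bv (k := k)) := by
  intro S T h
  unfold bv at h
  have e : ∀ S : Finset (Fin k), ∑ i ∈ S, 2 ^ (i : ℕ) =
      ∑ i ∈ S.map Fin.valEmbedding, 2 ^ i := by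
    intro S
    simp
  rw [e, e] at h
  exact Finset.map_injective _ (Finset.geomSum_injective le_rfl h)

lemma bv_lt {k : ℕ} (T : Finset (Fin k)) : bv T < 2 ^ k := by
  have h : bv T ≤ ∑ i : Fin k, 2 ^ (i : ℕ) :=
    Finset.sum_le_sum_of_subset (Finset.subset_univ T)
  rw [Fin.sum_univ_eq_sum_range (fun i => 2 ^ i) k] at h
  have := Nat.geomSum_lt (m := 2) le_rfl (s := Finset.range k) (n := k) (by simp)
  omega

lemma bv_surj {k x : ℕ} (hx : x < 2 ^ k) : ∃ T : Finset (Fin k), bv T = x := by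
  have hb : Function.Bijective (fun T : Finset (Fin k) => (⟨bv T, bv_lt T⟩ : Fin (2 ^ k))) := by
    rw [Fintype.bijective_iff_injective_and_card]
    refine ⟨fun S T h => bv_inj k (by simpa using h), by simp⟩
  obtain ⟨T, hT⟩ := hb.2 ⟨x, hx⟩
  exact ⟨T, by simpa using hT⟩

lemma usum_wt_even {k q x : ℕ} (hx : x < 2 ^ k) : ∃ C, usum (wt k q) C = 2 * x := by
  obtain ⟨T, rfl⟩ := bv_surj hx
  refine ⟨T.map (Fin.succEmb k), ?_⟩
  have e : tl (T.map (Fin.succEmb k)) = T := by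
    ext i
    simp [tl]
  rw [usum_wt, e]
  simp

lemma usum_wt_odd {k q x : ℕ} (hx : x < 2 ^ k) : ∃ C, usum (wt k q) C = q + 2 * x := by
  obtain ⟨T, rfl⟩ := bv_surj hx
  refine ⟨insert 0 (T.map (Fin.succEmb k)), ?_⟩
  have e : tl (insert 0 (T.map (Fin.succEmb k))) = T := by
    ext i
    simp [tl]
  rw [usum_wt, e]
  simp

lemma wt_inj (k N : ℕ) : Function.Injective (usum (wt k (2 * N + 1))) := by
  intro A B h
  rw [usum_wt, usum_wt] at h
  have h0 : (0 ∈ A ↔ 0 ∈ B) := by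
    by_cases ha : 0 ∈ A <;> by_cases hb : 0 ∈ B <;> simp only [ha, hb, if_true, if_false] at h ⊢ <;>
      omega
  have ht : tl A = tl B := by
    apply bv_inj
    simp only [h0] at h
    omega
  ext i
  refine Fin.cases h0 (fun j => ?_) i
  have := congrArg (fun S => j ∈ S) ht
  simpa [tl] using this

lemma wt_gap {k N : ℕ} (hN : 2 * N + 1 < 2 ^ k) (A B : Finset (Fin (k + 1)))
    (hd : Disjoint A B) (h : usum (wt k (2 * N + 1)) A + 2 ≤ usum (wt k (2 * N + 1)) B) :
    ∃ D, Disjoint D (A ∪ B) ∧ ∃ C, usum (wt k (2 * N + 1)) (A ∪ D) < usum (wt k (2 * N + 1)) C ∧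
      usum (wt k (2 * N + 1)) C < usum (wt k (2 * N + 1)) (B ∪ D) := by
  have hA := usum_wt k (2 * N + 1) A
  have hB := usum_wt k (2 * N + 1) B
  have lA := bv_lt (tl A)
  have lAB : bv (tl A) + bv (tl B) < 2 ^ k := by
    have hdt : Disjoint (tl A) (tl B) := by
      rw [Finset.disjoint_left] at hd ⊢
      intro i h1 h2
      simp only [tl, Finset.mem_filter, Finset.mem_univ, true_and] at h1 h2
      exact hd h1 h2
    have hu : bv (tl A ∪ tl B) = bv (tl A) + bv (tl B) := Finset.sum_union hdt
    rw [← hu]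
    exact bv_lt _
  by_cases h3 : usum (wt k (2 * N + 1)) A + 3 ≤ usum (wt k (2 * N + 1)) B
  · refine ⟨∅, by simp, ?_⟩
    simp only [Finset.union_empty]
    by_cases ha : 0 ∈ A
    · have hb : 0 ∉ B := Finset.disjoint_left.1 hd ha
      simp only [ha, hb, if_true, if_false] at hA hB
      obtain ⟨C, hC⟩ := usum_wt_odd (k := k) (q := 2 * N + 1) (x := bv (tl A) + 1) (by omega)
      exact ⟨C, by omega, by omega⟩
    · simp only [ha, if_false] at hA
      obtain ⟨C, hC⟩ := usum_wt_even (k := k) (q := 2 * N + 1) (x := bv (tl A) + 1)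
        (by split_ifs at hB <;> omega)
      exact ⟨C, by omega, by omega⟩
  · have ha : 0 ∉ A := by
      intro ha
      have hb : 0 ∉ B := Finset.disjoint_left.1 hd ha
      simp only [ha, hb, if_true, if_false] at hA hB
      omega
    have hb : 0 ∉ B := by
      intro hb
      simp only [ha, hb, if_true, if_false] at hA hB
      omega
    simp only [ha, hb, if_false] at hA hB
    by_cases hc : N ≤ bv (tl A)
    · refine ⟨∅, by simp, ?_⟩
      simp only [Finset.union_empty]
      obtain ⟨C, hC⟩ := usum_wt_odd (k := k) (q := 2 * N + 1) (x := bv (tl A) - N) (by omega)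
      exact ⟨C, by omega, by omega⟩
    · have dA : Disjoint A {0} := by simpa using ha
      have dB : Disjoint B {0} := by simpa using hb
      have h0 : usum (wt k (2 * N + 1)) {0} = 2 * N + 1 := by simp [usum, wt]
      refine ⟨{0}, Finset.disjoint_union_right.2 ⟨dA.symm, dB.symm⟩, ?_⟩
      rw [usum_union _ dA, usum_union _ dB, h0]
      obtain ⟨C, hC⟩ := usum_wt_even (k := k) (q := 2 * N + 1) (x := bv (tl A) + N + 1) (by omega)
      exact ⟨C, by omega, by omega⟩

/-! ### Counting signed binary representations -/

/-- Signed binary value. -/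
def sv {k : ℕ} (v : Fin k → SignType) : ℤ := ∑ i, (v i : ℤ) * 2 ^ (i : ℕ)

/-- Number of signed binary representations of `N` with `k` digits. -/
def sc (k : ℕ) (N : ℤ) : ℕ := #{v : Fin k → SignType | sv v = N}

lemma card_cons_sign {k : ℕ} (P : (Fin (k + 1) → SignType) → Prop) [DecidablePred P] :
    #{v | P v} = #{v : Fin k → SignType | P (Fin.cons 0 v)} +
      #{v : Fin k → SignType | P (Fin.cons (-1) v)} +
      #{v : Fin k → SignType | P (Fin.cons 1 v)} := by
  have h : #{v | P v} = ∑ s : SignType, #{v : Fin k → SignType | P (Fin.cons s v)} := by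
    simp only [Finset.card_filter]
    rw [← (Fin.consEquiv (fun _ : Fin (k + 1) => SignType)).sum_comp, Fintype.sum_prod_type]
    rfl
  rw [h]
  have hu : (univ : Finset SignType) = {0, -1, 1} := rfl
  rw [hu, Finset.sum_insert (by decide), Finset.sum_insert (by decide), Finset.sum_singleton,
    add_assoc]

lemma sv_cons {k : ℕ} (s : SignType) (v : Fin k → SignType) :
    sv (Fin.cons s v : Fin (k + 1) → SignType) = s + 2 * sv v := by
  unfold sv
  rw [Fin.sum_univ_succ, Finset.mul_sum]
  simp only [Fin.cons_zero, Fin.cons_succ, Fin.val_zero, Fin.val_succ]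
  congr 1
  · simp
  · refine Finset.sum_congr rfl fun i _ => ?_
    ring

lemma card_eq_sc {k : ℕ} (P : (Fin k → SignType) → Prop) [DecidablePred P] (N : ℤ)
    (h : ∀ v, P v ↔ sv v = N) : #{v | P v} = sc k N := by
  unfold sc
  congr 1
  exact Finset.filter_congr fun v _ => h v

lemma card_eq_zero' {k : ℕ} (P : (Fin k → SignType) → Prop) [DecidablePred P]
    (h : ∀ v, ¬ P v) : #{v | P v} = 0 := by
  rw [Finset.card_eq_zero]
  exact Finset.filter_eq_empty_iff.2 fun v _ => h v

lemma sc_even (k : ℕ) (M : ℤ) : sc (k + 1) (2 * M) = sc k M := by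
  conv_lhs => unfold sc
  rw [card_cons_sign]
  simp only [sv_cons]
  rw [card_eq_sc _ M, card_eq_zero', card_eq_zero']
  · simp
  · intro v
    simp only [SignType.coe_one]
    omega
  · intro v
    simp only [SignType.coe_neg_one]
    omega
  · intro v
    simp only [SignType.coe_zero]
    omega

lemma sc_odd (k : ℕ) (M : ℤ) : sc (k + 1) (2 * M + 1) = sc k M + sc k (M + 1) := by
  conv_lhs => unfold sc
  rw [card_cons_sign]
  simp only [sv_cons]
  rw [card_eq_zero', card_eq_sc _ (M + 1), card_eq_sc _ M]
  · omega
  · intro v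
    simp only [SignType.coe_one]
    omega
  · intro v
    simp only [SignType.coe_neg_one]
    omega
  · intro v
    simp only [SignType.coe_zero]
    omega

lemma sc_zero (N : ℤ) : sc 0 N = if N = 0 then 1 else 0 := by
  unfold sc sv
  split_ifs with h
  · subst h
    simp
  · simp [Ne.symm h]

lemma sc_neg (k : ℕ) : ∀ N : ℤ, sc k (-N) = sc k N := by
  induction k with
  | zero =>
    intro N
    simp [sc_zero]
  | succ k ih =>
    intro N
    rcases Int.even_or_odd' N with ⟨M, rfl | rfl⟩
    · rw [show -(2 * M) = 2 * (-M) by ring, sc_even, sc_even, ih]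
    · rw [show -(2 * M + 1) = 2 * (-(M + 1)) + 1 by ring, sc_odd, sc_odd, ih,
        show -(M + 1) + 1 = -M by ring, ih, add_comm]

lemma exists_fib (k : ℕ) : ∃ N : ℕ, 2 * N + 1 < 2 ^ (k + 1) ∧
    ((sc (k + 1) N = Nat.fib (k + 1) ∧ sc (k + 1) (N + 1) = Nat.fib (k + 2)) ∨
     (sc (k + 1) N = Nat.fib (k + 2) ∧ sc (k + 1) (N + 1) = Nat.fib (k + 1))) := by
  induction k with
  | zero =>
    refine ⟨0, by norm_num, Or.inl ⟨?_, ?_⟩⟩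
    · have := sc_even 0 0
      simpa [sc_zero] using this
    · have := sc_odd 0 0
      simpa [sc_zero] using this
  | succ k ih =>
    have hf : Nat.fib (k + 1 + 2) = Nat.fib (k + 1) + Nat.fib (k + 2) := Nat.fib_add_two
    obtain ⟨N, hN, h | h⟩ := ih
    · refine ⟨2 * N + 1, by rw [pow_succ]; omega, Or.inr ⟨?_, ?_⟩⟩
      · push_cast
        rw [sc_odd, h.1, h.2, hf]
      · push_cast
        rw [show (2 * (N : ℤ) + 1 + 1) = 2 * (N + 1) by ring, sc_even, h.2]
    · refine ⟨2 * N, by rw [pow_succ]; omega, Or.inl ⟨?_, ?_⟩⟩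
      · push_cast
        rw [sc_even, h.1]
      · push_cast
        rw [sc_odd, h.1, h.2, hf, add_comm]

/-- The pair of sets attached to a sign vector. -/
def toPair {n : ℕ} (v : Fin n → SignType) : Finset (Fin n) × Finset (Fin n) :=
  (univ.filter fun i => v i = -1, univ.filter fun i => v i = 1)

lemma toPair_inj (n : ℕ) : Function.Injective (toPair (n := n)) := by
  intro v w h
  unfold toPair at h
  rw [Prod.mk.injEq] at h
  funext i
  have h1 := congrArg (fun S => i ∈ S) h.1
  have h2 := congrArg (fun S => i ∈ S) h.2
  simp only [Finset.mem_filter, Finset.mem_univ, true_and, eq_iff_iff] at h1 h2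
  generalize v i = a at *
  generalize w i = b at *
  revert a b
  decide

lemma toPair_usum {n : ℕ} (m : Fin n → ℕ) (v : Fin n → SignType) :
    (usum m (toPair v).2 : ℤ) - usum m (toPair v).1 = ∑ i, (v i : ℤ) * m i := by
  unfold usum toPair
  push_cast
  rw [Finset.sum_filter, Finset.sum_filter, ← Finset.sum_sub_distrib]
  refine Finset.sum_congr rfl fun i _ => ?_
  generalize v i = a
  cases a <;> simp

lemma pairs_ncard {n : ℕ} (m : Fin n → ℕ) :
    {p : Finset (Fin n) × Finset (Fin n) | Disjoint p.1 p.2 ∧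
      usum m p.2 = usum m p.1 + 1}.ncard =
    #{v : Fin n → SignType | ∑ i, (v i : ℤ) * m i = 1} := by
  rw [← Set.ncard_coe_finset, ← Set.ncard_image_of_injective _ (toPair_inj n)]
  congr 1
  ext ⟨A, B⟩
  simp only [Set.mem_ofPred_eq, Set.mem_image, Finset.coe_filter, Finset.mem_univ, true_and]
  constructor
  · rintro ⟨hd, hs⟩
    have hp : toPair (fun i => if i ∈ A then -1 else if i ∈ B then 1 else 0) = (A, B) := by
      unfold toPair
      rw [Prod.mk.injEq]
      constructor
      · ext i
        by_cases ha : i ∈ A <;> by_cases hb : i ∈ B <;> simp [ha, hb]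
      · ext i
        by_cases ha : i ∈ A
        · have hb := Finset.disjoint_left.1 hd ha
          simp [ha, hb]
        · by_cases hb : i ∈ B <;> simp [ha, hb]
    refine ⟨_, ?_, hp⟩
    rw [← toPair_usum, hp]
    simp only
    omega
  · rintro ⟨v, hv, hp⟩
    rw [← toPair_usum, hp] at hv
    refine ⟨?_, by simp only at hv; omega⟩
    unfold toPair at hp
    rw [Prod.mk.injEq] at hp
    rw [← hp.1, ← hp.2, Finset.disjoint_left]
    intro i h1 h2
    simp only [Finset.mem_filter, Finset.mem_univ, true_and] at h1 h2
    rw [h1] at h2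
    exact absurd h2 (by decide)

lemma wt_count (k N : ℕ) :
    #{v : Fin (k + 1) → SignType | ∑ i, (v i : ℤ) * wt k (2 * N + 1) i = 1} =
      sc k N + sc k (N + 1) := by
  have e : ∀ v : Fin (k + 1) → SignType, ∑ i, (v i : ℤ) * wt k (2 * N + 1) i =
      (v 0 : ℤ) * (2 * N + 1) + 2 * sv (Fin.tail v) := by
    intro v
    rw [Fin.sum_univ_succ]
    have e0 : (wt k (2 * N + 1) 0 : ℤ) = 2 * N + 1 := by simp [wt]
    have e1 : ∀ i : Fin k, (wt k (2 * N + 1) i.succ : ℤ) = 2 * 2 ^ (i : ℕ) := by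
      intro i
      simp [wt]
    rw [e0]
    unfold sv
    rw [Finset.mul_sum]
    refine congrArg _ (Finset.sum_congr rfl fun i _ => ?_)
    rw [e1, Fin.tail]
    ring
  simp only [e]
  rw [card_cons_sign]
  simp only [Fin.cons_zero, Fin.tail_cons]
  rw [card_eq_zero', card_eq_sc _ ((N : ℤ) + 1), card_eq_sc _ (-(N : ℤ)), sc_neg]
  · omega
  · intro v
    simp only [SignType.coe_one]
    omega
  · intro v
    simp only [SignType.coe_neg_one]
    omega
  · intro v
    simp only [SignType.coe_zero]
    omega

/-- For every `n ≥ 4` there is a representable comparative probability order on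
`[n]` with exactly `F_{n+1}` flippable pairs, all of whose flips (over flippable
pairs with `A ≠ ∅`) give representable orders. -/
theorem stmt3 {n : ℕ} (hn : 4 ≤ n) :
    ∃ le : Finset (Fin n) → Finset (Fin n) → Prop,
      IsCPO le ∧ Representable le ∧
      (FlippablePairs le).ncard = Nat.fib (n + 1) ∧
      ∀ A B : Finset (Fin n), Flippable le A B → A ≠ ∅ →
        Representable (flipOrder le A B) := by
  obtain ⟨k, rfl⟩ : ∃ k, n = k + 1 + 1 := ⟨n - 2, by omega⟩
  obtain ⟨N, hN, hc⟩ := exists_fib k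
  have inj := wt_inj (k + 1) N
  have fl := flippable_iff inj (wt_gap hN)
  refine ⟨uord (wt (k + 1) (2 * N + 1)), uord_isCPO inj, uord_rep inj, ?_, ?_⟩
  · unfold FlippablePairs
    simp only [fl]
    rw [pairs_ncard, wt_count]
    have hf : Nat.fib (k + 1 + 1 + 1) = Nat.fib (k + 1) + Nat.fib (k + 1 + 1) := Nat.fib_add_two
    rw [hf]
    rcases hc with h | h
    · rw [h.1, h.2]
    · rw [h.1, h.2, add_comm]
  · intro A B h hA
    rw [fl] at h
    exact flip_rep inj h.1 h.2 hA
end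

section
/- Let q be an odd positive integer with q < 2ⁿ, let j be the integer with 2^{j−1} ≤ q < 2^j, and define the utility vector m on [n+1] by m_i = 2^i for 1 ≤ i ≤ j−1, m_j = q, and m_i = 2^{i−1} for j+1 ≤ i ≤ n+1. Write u(A) = ∑_{i∈A} m_i. Then for every nonempty subset B ⊆ [n+1] there exists a subset A ⊆ [n+1] with 0 < u(B) − u(A) ≤ 2. Consequently, any two consecutive subsets in the order ≼_m (A ≼_m B ⇔ u(A) ≤ u(B)) have utilities differing by at most 2. -/
open Finset

/-- The utility vector on `[n+1]` (element `k` corresponds to index `k-1`):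
`m_k = 2^k` for `k < j`, `m_j = q`, and `m_k = 2^(k-1)` for `k > j`. -/
def mq (n q j : ℕ) : Fin (n + 1) → ℕ := fun i =>
  if (i : ℕ) + 1 < j then 2 ^ ((i : ℕ) + 1)
  else if (i : ℕ) + 1 = j then q
  else 2 ^ (i : ℕ)

lemma exists_bits (n t : ℕ) (ht : t < 2 ^ n) :
    ∃ S : Finset (Fin n), ∑ i ∈ S, 2 ^ (i : ℕ) = t := by
  induction n generalizing t with
  | zero => exact ⟨∅, by simp at ht ⊢; omega⟩
  | succ n ih =>
    by_cases h : t < 2 ^ n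
    · obtain ⟨S, hS⟩ := ih t h
      exact ⟨S.map Fin.castSuccEmb, by simpa using hS⟩
    · obtain ⟨S, hS⟩ := ih (t - 2 ^ n) (by rw [pow_succ] at ht; omega)
      refine ⟨insert (Fin.last n) (S.map Fin.castSuccEmb), ?_⟩
      rw [Finset.sum_insert]
      · simp [hS]; omega
      · simp

lemma bits_lt (n : ℕ) (S : Finset (Fin n)) : ∑ i ∈ S, 2 ^ (i : ℕ) < 2 ^ n := by
  have h1 : ∑ i ∈ S, 2 ^ (i : ℕ) ≤ ∑ i : Fin n, 2 ^ (i : ℕ) :=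
    Finset.sum_le_sum_of_subset (Finset.subset_univ S)
  rw [Fin.sum_univ_eq_sum_range (fun i => 2 ^ i)] at h1
  have h2 := Nat.geomSum_lt (m := 2) (n := n) (s := Finset.range n) le_rfl (by simp)
  omega

lemma mq_succAbove (n q j : ℕ) (p : Fin (n + 1)) (hp : (p : ℕ) + 1 = j) (i : Fin n) :
    mq n q j (p.succAbove i) = 2 * 2 ^ (i : ℕ) := by
  unfold mq
  rcases lt_or_ge (i : ℕ) (p : ℕ) with h | h
  · rw [Fin.succAbove_of_castSucc_lt _ _ (by simpa [Fin.lt_def] using h)]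
    rw [if_pos (by simp; omega)]
    simp [pow_succ, mul_comm]
  · rw [Fin.succAbove_of_le_castSucc _ _ (by simpa [Fin.le_def] using h)]
    rw [if_neg (by simp; omega), if_neg (by simp; omega)]
    simp [pow_succ, mul_comm]

lemma usum_map (n q j : ℕ) (p : Fin (n + 1)) (hp : (p : ℕ) + 1 = j) (S : Finset (Fin n)) :
    usum (mq n q j) (S.map p.succAboveEmb) = 2 * ∑ i ∈ S, 2 ^ (i : ℕ) := by
  unfold usum
  rw [Finset.sum_map, Finset.mul_sum]
  exact Finset.sum_congr rfl fun i _ => mq_succAbove n q j p hp i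

lemma exists_even (n q j : ℕ) (p : Fin (n + 1)) (hp : (p : ℕ) + 1 = j) (t : ℕ)
    (ht : t < 2 ^ n) :
    ∃ A : Finset (Fin (n + 1)), p ∉ A ∧ usum (mq n q j) A = 2 * t := by
  obtain ⟨S, hS⟩ := exists_bits n t ht
  exact ⟨S.map p.succAboveEmb, by simp [Fin.succAbove_ne], by rw [usum_map n q j p hp, hS]⟩

lemma even_of_notMem (n q j : ℕ) (p : Fin (n + 1)) (hp : (p : ℕ) + 1 = j)
    (A : Finset (Fin (n + 1))) (hA : p ∉ A) :
    ∃ t < 2 ^ n, usum (mq n q j) A = 2 * t := by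
  refine ⟨_, bits_lt n (Finset.univ.filter fun i => p.succAbove i ∈ A), ?_⟩
  rw [← usum_map n q j p hp]
  congr 1
  ext x
  simp only [Finset.mem_map, Finset.mem_filter, Finset.mem_univ, true_and,
    Fin.succAboveEmb_apply]
  constructor
  · intro hx
    obtain ⟨y, rfl⟩ := Fin.exists_succAbove_eq (x := x) (y := p) (by rintro rfl; exact hA hx)
    exact ⟨y, hx, rfl⟩
  · rintro ⟨y, hy, rfl⟩
    exact hy

lemma usum_insert (n q j : ℕ) (p : Fin (n + 1)) (hp : (p : ℕ) + 1 = j)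
    (A : Finset (Fin (n + 1))) (hA : p ∉ A) :
    usum (mq n q j) (insert p A) = q + usum (mq n q j) A := by
  unfold usum
  rw [Finset.sum_insert hA]
  simp [mq, hp]

lemma stmt6_aux {n q j : ℕ} (hq0 : 0 < q) (hodd : Odd q) (hqn : q < 2 ^ n)
    (hj1 : 2 ^ (j - 1) ≤ q) (hj2 : q < 2 ^ j) (B : Finset (Fin (n + 1))) (hB : B ≠ ∅) :
      ∃ A : Finset (Fin (n + 1)),
        usum (mq n q j) A < usum (mq n q j) B ∧
        usum (mq n q j) B ≤ usum (mq n q j) A + 2 := by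
  have hj0 : j ≠ 0 := by rintro rfl; simp at hj2; omega
  have hjn : j - 1 < n := (Nat.pow_lt_pow_iff_right (by norm_num : 1 < 2)).1 (hj1.trans_lt hqn)
  obtain ⟨p, hp⟩ : ∃ p : Fin (n + 1), (p : ℕ) + 1 = j := ⟨⟨j - 1, by omega⟩, by simp; omega⟩
  by_cases hpB : p ∈ B
  · obtain ⟨t, ht, hBt⟩ := even_of_notMem n q j p hp (B.erase p) (by simp)
    have h1 := usum_insert n q j p hp (B.erase p) (by simp)
    rw [Finset.insert_erase hpB, hBt] at h1
    rcases Nat.eq_zero_or_pos t with h0 | h0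
    · obtain ⟨s, hs⟩ := hodd
      obtain ⟨A, -, hA⟩ := exists_even n q j p hp s (by omega)
      exact ⟨A, by omega, by omega⟩
    · obtain ⟨A, hpA, hA⟩ := exists_even n q j p hp (t - 1) (by omega)
      have := usum_insert n q j p hp A hpA
      exact ⟨insert p A, by omega, by omega⟩
  · obtain ⟨t, ht, hBt⟩ := even_of_notMem n q j p hp B hpB
    have hpos : 0 < usum (mq n q j) B := by
      unfold usum
      refine Finset.sum_pos (fun i _ => ?_) (Finset.nonempty_iff_ne_empty.2 hB)
      unfold mq
      split_ifs <;> positivity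
    obtain ⟨A, hpA, hA⟩ := exists_even n q j p hp (t - 1) (by omega)
    exact ⟨A, by omega, by omega⟩

/-- For the utility vector `mq n q j`: every nonempty `B` admits an `A` with
`0 < u(B) − u(A) ≤ 2`; consequently any two consecutive subsets in `≼_m` have
utilities differing by at most 2. -/
theorem stmt6 {n q j : ℕ} (hq0 : 0 < q) (hodd : Odd q) (hqn : q < 2 ^ n)
    (hj1 : 2 ^ (j - 1) ≤ q) (hj2 : q < 2 ^ j) :
    (∀ B : Finset (Fin (n + 1)), B ≠ ∅ →
      ∃ A : Finset (Fin (n + 1)),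
        usum (mq n q j) A < usum (mq n q j) B ∧
        usum (mq n q j) B ≤ usum (mq n q j) A + 2) ∧
    (∀ C D : Finset (Fin (n + 1)), cpLT (uord (mq n q j)) C D →
      (¬ ∃ E, cpLT (uord (mq n q j)) C E ∧ cpLT (uord (mq n q j)) E D) →
      usum (mq n q j) D ≤ usum (mq n q j) C + 2) := by
  refine ⟨fun B hB => stmt6_aux hq0 hodd hqn hj1 hj2 B hB, ?_⟩
  intro C D _ hno
  by_contra hcon
  push Not at hcon
  have hD : D ≠ ∅ := by
    rintro rfl
    simp [usum] at hcon
  obtain ⟨A, hA1, hA2⟩ := stmt6_aux hq0 hodd hqn hj1 hj2 D hD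
  refine hno ⟨A, ⟨?_, ?_⟩, ⟨?_, ?_⟩⟩
  · show usum _ C ≤ usum _ A
    omega
  · rintro rfl
    omega
  · exact hA1.le
  · rintro rfl
    omega
end

section
/- Let q be an odd positive integer with q < 2ⁿ, let j be the integer with 2^{j−1} ≤ q < 2^j, and define the utility vector m on [n+1] by m_i = 2^i for 1 ≤ i ≤ j−1, m_j = q, and m_i = 2^{i−1} for j+1 ≤ i ≤ n+1. Write u(A) = ∑_{i∈A} m_i. Then for every integer t with q ≤ t ≤ 2^{n+1} − 2 there is exactly one subset B ⊆ [n+1] with u(B) = t, and this B contains j if and only if t is odd. In particular, in the order ≼_m, from the position of {j} up to the last subset not containing j, subsets not containing j alternate with subsets containing j, and consecutive subsets in this range have utilities differing by exactly 1. -/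
open Finset

theorem aux_inj {n : ℕ} (C D : Finset (Fin n))
    (h : ∑ i ∈ C, 2 ^ (i : ℕ) = ∑ i ∈ D, 2 ^ (i : ℕ)) : C = D := by
  apply Finset.map_injective Fin.valEmbedding
  apply Finset.geomSum_injective (n := 2) le_rfl
  simpa [Finset.sum_map] using h

theorem aux_ex {n s : ℕ} (hs : s < 2 ^ n) :
    ∃ C : Finset (Fin n), ∑ i ∈ C, 2 ^ (i : ℕ) = s := by
  induction n generalizing s with
  | zero => exact ⟨∅, by simp at hs ⊢; omega⟩
  | succ n ih =>
    rw [pow_succ] at hs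
    by_cases h : s < 2 ^ n
    · obtain ⟨C, hC⟩ := ih h
      exact ⟨C.map Fin.castSuccEmb, by simpa [Finset.sum_map] using hC⟩
    · obtain ⟨C, hC⟩ := ih (s := s - 2 ^ n) (by omega)
      refine ⟨insert (Fin.last n) (C.map Fin.castSuccEmb), ?_⟩
      rw [Finset.sum_insert (by simp [Fin.castSucc_ne_last])]
      simp [Finset.sum_map, hC]
      omega

theorem aux_usum {n q : ℕ} (p : Fin (n + 1)) (B : Finset (Fin (n + 1))) :
    usum (mq n q (p + 1)) B = (if p ∈ B then q else 0) +
      2 * ∑ i ∈ (Finset.univ.filter fun i : Fin n => p.succAbove i ∈ B), 2 ^ (i : ℕ) := by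
  have h0 : usum (mq n q (p + 1)) B = ∑ i, if i ∈ B then mq n q (p + 1) i else 0 := by
    simp [usum, Finset.sum_ite_mem]
  rw [h0, Fin.sum_univ_succAbove _ p, Finset.sum_filter, Finset.mul_sum]
  congr 1
  · simp [mq]
  · refine Finset.sum_congr rfl fun i _ => ?_
    have : mq n q (p + 1) (p.succAbove i) = 2 * 2 ^ (i : ℕ) := by
      rw [← pow_succ']
      by_cases h : i.castSucc < p
      · rw [Fin.succAbove_of_castSucc_lt _ _ h]
        have : (i : ℕ) < p := h
        simp [mq, this]
      · rw [Fin.succAbove_of_le_castSucc _ _ (not_lt.mp h)]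
        have : (p : ℕ) ≤ i := not_lt.mp h
        have h1 : ¬ ((i : ℕ) + 1 < p) := by omega
        have h2 : ¬ ((i : ℕ) + 1 = p) := by omega
        simp [mq, h1, h2]
    rw [this]
    split_ifs <;> simp

/-- For the utility vector `mq n q j`: every integer `t` with
`q ≤ t ≤ 2^(n+1) − 2` is the utility of exactly one subset `B ⊆ [n+1]`, and
this `B` contains the element `j` iff `t` is odd. -/
theorem stmt7 {n q j : ℕ} (hq0 : 0 < q) (hodd : Odd q) (hqn : q < 2 ^ n)
    (hj1 : 2 ^ (j - 1) ≤ q) (hj2 : q < 2 ^ j) :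
    ∀ t : ℕ, q ≤ t → t ≤ 2 ^ (n + 1) - 2 →
      (∃! B : Finset (Fin (n + 1)), usum (mq n q j) B = t) ∧
      (∀ B : Finset (Fin (n + 1)), usum (mq n q j) B = t →
        ((∃ i ∈ B, (i : ℕ) + 1 = j) ↔ Odd t)) := by
  intro t hqt ht
  have hj0 : 1 ≤ j := by
    rcases Nat.eq_zero_or_pos j with rfl | h
    · simp at hj2; omega
    · exact h
  have hjn : j - 1 < n := (Nat.pow_lt_pow_iff_right (by norm_num : 1 < 2)).1 (hj1.trans_lt hqn)
  obtain ⟨p, rfl⟩ : ∃ p : Fin (n + 1), j = p + 1 := ⟨⟨j - 1, by omega⟩, by simp; omega⟩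
  have hpar : ∀ B : Finset (Fin (n + 1)), usum (mq n q (p + 1)) B = t → (p ∈ B ↔ Odd t) := by
    intro B hB
    rw [aux_usum] at hB
    rw [Nat.odd_iff] at hodd ⊢
    split_ifs at hB with h
    · simp only [h, true_iff]; omega
    · simp only [h, false_iff]; omega
  refine ⟨?_, ?_⟩
  · apply existsUnique_of_exists_of_unique
    · have hs : (t - if Odd t then q else 0) / 2 < 2 ^ n := by
        rw [pow_succ] at ht
        have := Nat.two_pow_pos n
        split_ifs <;> omega
      obtain ⟨C, hC⟩ := aux_ex hs
      refine ⟨Finset.univ.filter fun i => (i = p ∧ Odd t) ∨ ∃ k ∈ C, p.succAbove k = i, ?_⟩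
      rw [aux_usum]
      simp only [Finset.mem_filter, Finset.mem_univ, true_and, Fin.succAbove_ne, false_and,
        and_false, exists_false, or_false, false_or, Fin.succAbove_right_inj, exists_eq_right,
        Finset.filter_univ_mem, hC]
      simp only [Nat.odd_iff] at hodd ⊢
      split_ifs <;> omega
    · intro B B' hB hB'
      have h1 := (hpar B hB).trans (hpar B' hB').symm
      rw [aux_usum] at hB hB'
      have h2 := aux_inj _ _ (show ∑ i ∈ (Finset.univ.filter fun i : Fin n => p.succAbove i ∈ B),
          2 ^ (i : ℕ) = ∑ i ∈ (Finset.univ.filter fun i : Fin n => p.succAbove i ∈ B'),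
          2 ^ (i : ℕ) by
        simp only [h1] at hB
        omega)
      ext i
      rcases Fin.eq_self_or_eq_succAbove p i with rfl | ⟨k, rfl⟩
      · exact h1
      · simpa using Finset.ext_iff.1 h2 k
  · intro B hB
    rw [← hpar B hB]
    constructor
    · rintro ⟨i, hi, h⟩
      have : i = p := Fin.ext (by omega)
      exact this ▸ hi
    · intro h
      exact ⟨p, h, rfl⟩
end

section
/- For n ≥ 3 let q_n = ((−1)^{n+1} + 2ⁿ)/3, let g_n be the number of ordered pairs (A,B) of disjoint subsets of [n] with ∑_{i∈B} 2^i − ∑_{i∈A} 2^i = q_n + 1, and let h_n be the number of ordered pairs (A,B) of disjoint subsets of [n] with ∑_{i∈B} 2^i − ∑_{i∈A} 2^i = q_n − 1. Then for every odd n ≥ 3: g_{n+1} = g_n + h_n and h_{n+1} = h_n; and for every even n ≥ 4: g_{n+1} = g_n and h_{n+1} = g_n + h_n. -/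
open Finset

/-- `qn n = ((−1)^(n+1) + 2^n) / 3` as a natural number. -/
def qn (n : ℕ) : ℕ := if n % 2 = 1 then (2 ^ n + 1) / 3 else (2 ^ n - 1) / 3

/-- The utility vector `m` on `[n+1]` (element `k` corresponds to index `k-1`):
`m_k = 2^k` for `1 ≤ k ≤ n−2`, `m_{n−1} = qn n`, `m_n = 2^(n−1)`, `m_{n+1} = 2^n`. -/
def mvec (n : ℕ) : Fin (n + 1) → ℕ := fun i =>
  if (i : ℕ) + 1 ≤ n - 2 then 2 ^ ((i : ℕ) + 1)
  else if (i : ℕ) + 1 = n - 1 then qn n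
  else if (i : ℕ) + 1 = n then 2 ^ (n - 1)
  else 2 ^ n

/-- Ordered pairs `(A,B)` of disjoint subsets of `[n]` (element `k` has utility
`2^k`, i.e. index `i` has utility `2^(i+1)`) with utility difference `d`. -/
def diffPairs (n : ℕ) (d : ℕ) : Set (Finset (Fin n) × Finset (Fin n)) :=
  {p | Disjoint p.1 p.2 ∧
    ∑ i ∈ p.2, 2 ^ ((i : ℕ) + 1) = (∑ i ∈ p.1, 2 ^ ((i : ℕ) + 1)) + d}

/-- `g n`: the number of disjoint pairs with utility difference `qn n + 1`. -/
noncomputable def gfun (n : ℕ) : ℕ := (diffPairs n (qn n + 1)).ncard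

/-- `h n`: the number of disjoint pairs with utility difference `qn n − 1`. -/
noncomputable def hfun (n : ℕ) : ℕ := (diffPairs n (qn n - 1)).ncard

/-- Shift down. -/
def dnS {n : ℕ} (A : Finset (Fin (n + 1))) : Finset (Fin n) :=
  Finset.univ.filter (fun i => i.succ ∈ A)

open Classical in
/-- Shift up, inserting `0` if `a`. -/
noncomputable def upS {n : ℕ} (a : Prop) (A : Finset (Fin n)) : Finset (Fin (n + 1)) :=
  Finset.univ.filter (fun i => Fin.cases (motive := fun _ => Prop) a (fun j => j ∈ A) i)

theorem mem_dnS {n : ℕ} (A : Finset (Fin (n + 1))) (i : Fin n) :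
    i ∈ dnS A ↔ i.succ ∈ A := by simp [dnS]

open Classical in
theorem zero_mem_upS {n : ℕ} (a : Prop) (A : Finset (Fin n)) :
    0 ∈ upS a A ↔ a := by simp [upS]

open Classical in
theorem succ_mem_upS {n : ℕ} (a : Prop) (A : Finset (Fin n)) (i : Fin n) :
    i.succ ∈ upS a A ↔ i ∈ A := by simp [upS]

open Classical in
theorem dnS_upS {n : ℕ} (a : Prop) (A : Finset (Fin n)) : dnS (upS a A) = A := by
  ext i; rw [mem_dnS, succ_mem_upS]

theorem ext_dnS {n : ℕ} {A B : Finset (Fin (n + 1))} (h0 : 0 ∈ A ↔ 0 ∈ B)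
    (h : dnS A = dnS B) : A = B := by
  ext i
  refine Fin.cases h0 (fun j => ?_) i
  rw [← mem_dnS, ← mem_dnS, h]

open Classical in
theorem sum_dnS {n : ℕ} (A : Finset (Fin (n + 1))) :
    ∑ i ∈ A, 2 ^ ((i : ℕ) + 1) =
      (if 0 ∈ A then 2 else 0) + 2 * ∑ i ∈ dnS A, 2 ^ ((i : ℕ) + 1) := by
  have h1 : ∑ i ∈ A, 2 ^ ((i : ℕ) + 1) =
      ∑ i : Fin (n + 1), if i ∈ A then 2 ^ ((i : ℕ) + 1) else 0 := by
    simp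
  rw [h1, Fin.sum_univ_succ, dnS, Finset.sum_filter, Finset.mul_sum]
  congr 1
  apply Finset.sum_congr rfl
  intro i _
  split_ifs <;> simp [pow_succ] <;> ring

theorem disj_dnS {n : ℕ} (A B : Finset (Fin (n + 1))) :
    Disjoint A B ↔ ¬ (0 ∈ A ∧ 0 ∈ B) ∧ Disjoint (dnS A) (dnS B) := by
  simp only [Finset.disjoint_left, mem_dnS, Fin.forall_fin_succ]
  tauto

open Classical in
theorem card_part (n d d' : ℕ) (a b : Prop) (hab : ¬ (a ∧ b))
    (hd : ∀ x y : ℕ, (if b then 2 else 0) + 2 * y = (if a then 2 else 0) + 2 * x + d ↔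
      y = x + d') :
    {p | p ∈ diffPairs (n + 1) d ∧ (0 ∈ p.1 ↔ a) ∧ (0 ∈ p.2 ↔ b)}.ncard
      = (diffPairs n d').ncard := by
  refine Set.ncard_congr (fun p _ => (dnS p.1, dnS p.2)) ?_ ?_ ?_
  · rintro ⟨A, B⟩ ⟨⟨h1, h2⟩, h3, h4⟩
    simp only at h1 h2 h3 h4
    rw [sum_dnS B, sum_dnS A] at h2
    simp only [h3, h4] at h2
    exact ⟨((disj_dnS _ _).1 h1).2, (hd _ _).1 h2⟩
  · rintro ⟨A, B⟩ ⟨A', B'⟩ ⟨_, h3, h4⟩ ⟨_, h3', h4'⟩ h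
    simp only [Prod.mk.injEq] at h3 h4 h3' h4' h ⊢
    exact ⟨ext_dnS (h3.trans h3'.symm) h.1, ext_dnS (h4.trans h4'.symm) h.2⟩
  · rintro ⟨A, B⟩ ⟨h1, h2⟩
    refine ⟨(upS a A, upS b B), ⟨⟨?_, ?_⟩, zero_mem_upS _ _, zero_mem_upS _ _⟩, ?_⟩
    · rw [disj_dnS]
      simp only [zero_mem_upS, dnS_upS]
      exact ⟨hab, h1⟩
    · simp only
      rw [sum_dnS (upS b B), sum_dnS (upS a A)]
      simp only [zero_mem_upS, dnS_upS]
      exact (hd _ _).2 h2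
    · simp only [dnS_upS]

theorem sum_even {n : ℕ} (A : Finset (Fin n)) : 2 ∣ ∑ i ∈ A, 2 ^ ((i : ℕ) + 1) :=
  Finset.dvd_sum fun i _ => dvd_pow_self 2 (by omega)

theorem card_even (n e : ℕ) (he : e % 2 = 0) :
    (diffPairs (n + 1) (2 * e)).ncard = (diffPairs n e).ncard := by
  classical
  rw [← card_part n (2 * e) e False False (by simp) (by intro x y; simp; omega)]
  congr 1
  ext ⟨A, B⟩
  simp only [Set.mem_setOf_eq, iff_false]
  refine ⟨fun h => ⟨h, ?_⟩, fun h => h.1⟩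
  obtain ⟨h1, h2⟩ := h
  simp only at h1 h2
  have h3 := ((disj_dnS _ _).1 h1).1
  rw [sum_dnS B, sum_dnS A] at h2
  have hA := sum_even (dnS A)
  have hB := sum_even (dnS B)
  by_cases ha : 0 ∈ A <;> by_cases hb : 0 ∈ B <;> simp only [ha, hb, if_true, if_false] at h2 h3 ⊢ <;>
    first | (exfalso; omega) | simp_all

theorem card_odd (n e : ℕ) (he : e % 2 = 1) :
    (diffPairs (n + 1) (2 * e)).ncard =
      (diffPairs n (e + 1)).ncard + (diffPairs n (e - 1)).ncard := by
  classical
  rw [← card_part n (2 * e) (e + 1) True False (by simp) (by intro x y; simp; omega),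
    ← card_part n (2 * e) (e - 1) False True (by simp) (by intro x y; simp; omega),
    ← Set.ncard_union_eq ?_ (Set.toFinite _) (Set.toFinite _)]
  · congr 1
    ext ⟨A, B⟩
    simp only [Set.mem_setOf_eq, iff_false, iff_true, Set.mem_union]
    refine ⟨fun h => ?_, fun h => h.elim (fun h => h.1) (fun h => h.1)⟩
    have h' := h
    obtain ⟨h1, h2⟩ := h
    simp only at h1 h2
    have h3 := ((disj_dnS _ _).1 h1).1
    rw [sum_dnS B, sum_dnS A] at h2
    have hA := sum_even (dnS A)
    have hB := sum_even (dnS B)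
    by_cases ha : 0 ∈ A <;> by_cases hb : 0 ∈ B <;> simp only [ha, hb, if_true, if_false] at h2 h3 ⊢ <;>
      first | (exfalso; omega) | simp_all
  · rw [Set.disjoint_left]
    rintro p ⟨_, h, _⟩ ⟨_, h', _⟩
    simp_all

theorem qn_odd (n : ℕ) (h : n % 2 = 1) : 3 * qn n = 2 ^ n + 1 ∧ qn n % 2 = 1 := by
  obtain ⟨k, rfl⟩ : ∃ k, n = 2 * k + 1 := ⟨n / 2, by omega⟩
  have : 4 ^ k % 3 = 1 := by simp [Nat.pow_mod]
  have h2 : 2 ^ (2 * k + 1) = 2 * 4 ^ k := by rw [pow_succ, pow_mul]; norm_num; ring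
  unfold qn
  rw [if_pos h, h2]
  omega

theorem qn_even (n : ℕ) (h : n % 2 = 0) (h0 : 1 ≤ n) :
    3 * qn n + 1 = 2 ^ n ∧ qn n % 2 = 1 := by
  obtain ⟨k, rfl⟩ : ∃ k, n = 2 * k + 2 := ⟨(n - 2) / 2, by omega⟩
  have : 4 ^ k % 3 = 1 := by simp [Nat.pow_mod]
  have h2 : 2 ^ (2 * k + 2) = 4 * 4 ^ k := by rw [pow_add, pow_mul]; norm_num; ring
  unfold qn
  rw [if_neg (by omega), h2]
  omega

/-- Recurrence relations for `g_n` and `h_n`: for odd `n ≥ 3`,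
`g_{n+1} = g_n + h_n` and `h_{n+1} = h_n`; for even `n ≥ 4`,
`g_{n+1} = g_n` and `h_{n+1} = g_n + h_n`. -/
theorem stmt10 (n : ℕ) :
    (3 ≤ n → Odd n → gfun (n + 1) = gfun n + hfun n ∧ hfun (n + 1) = hfun n) ∧
    (4 ≤ n → Even n → gfun (n + 1) = gfun n ∧ hfun (n + 1) = gfun n + hfun n) := by
  constructor
  · intro h3 ho
    have ho' := Nat.odd_iff.1 ho
    obtain ⟨a1, a2⟩ := qn_odd n ho'
    obtain ⟨b1, b2⟩ := qn_even (n + 1) (by omega) (by omega)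
    rw [pow_succ] at b1
    unfold gfun hfun
    rw [show qn (n + 1) + 1 = 2 * qn n by omega,
      show qn (n + 1) - 1 = 2 * (qn n - 1) by omega]
    exact ⟨card_odd _ _ a2, card_even _ _ (by omega)⟩
  · intro h3 ho
    have ho' := Nat.even_iff.1 ho
    obtain ⟨a1, a2⟩ := qn_even n ho' (by omega)
    obtain ⟨b1, b2⟩ := qn_odd (n + 1) (by omega)
    rw [pow_succ] at b1
    unfold gfun hfun
    rw [show qn (n + 1) + 1 = 2 * (qn n + 1) by omega,
      show qn (n + 1) - 1 = 2 * qn n by omega]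
    exact ⟨card_even _ _ (by omega), card_odd _ _ a2⟩
end
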